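/- arXiv:math/0601254 — 2 statements merged into one kernel-verified Lean document; each statement's English description precedes it below -/
import Mathlib

section
/- Let H be a finite-dimensional complex inner product space, let L be a commutative subspace lattice on H, and let Φ : Alg L → Alg L be a rank preserving linear map such that every element of L that is nonzero with N₋ ≠ H is consistent with respect to Φ. Then Φ(I) is invertible, the map Ψ defined by Ψ(A) = A·Φ(I)⁻¹ maps Alg L into Alg L, and there exists an invertible linear operator U on H such that (Ψ ∘ Φ)(A) = U A U⁻¹ for all A ∈ Alg L; in particular Ψ ∘ Φ is a unital, multiplicative, injective linear map on Alg L. -/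
open scoped InnerProductSpace

noncomputable section

/-- The join (closed linear span) of a family of subspaces of a Hilbert space. -/
def closedJoin {H : Type*} [NormedAddCommGroup H] [InnerProductSpace ℂ H]
    (S : Set (Submodule ℂ H)) : Submodule ℂ H :=
  (sSup S).topologicalClosure

/-- A subspace lattice on `H`: a family of closed subspaces containing `{0}` and `H`,
closed under arbitrary intersections and arbitrary closed linear spans. -/
structure IsSubspaceLattice {H : Type*} [NormedAddCommGroup H] [InnerProductSpace ℂ H]
    (L : Set (Submodule ℂ H)) : Prop where
  isClosed : ∀ E ∈ L, IsClosed (E : Set H)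
  bot_mem : ⊥ ∈ L
  top_mem : ⊤ ∈ L
  sInf_mem : ∀ S : Set (Submodule ℂ H), S ⊆ L → sInf S ∈ L
  join_mem : ∀ S : Set (Submodule ℂ H), S ⊆ L → closedJoin S ∈ L

/-- `M₋`: the join of all members of `L` that do not contain `M`. -/
def minus {H : Type*} [NormedAddCommGroup H] [InnerProductSpace ℂ H]
    (L : Set (Submodule ℂ H)) (M : Submodule ℂ H) : Submodule ℂ H :=
  closedJoin {E | E ∈ L ∧ ¬ M ≤ E}

open Classical in
/-- The orthogonal projection of `H` onto a closed subspace `E`, as an operator on `H`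
(junk value `0` if `E` is not closed). -/
def projOf {H : Type*} [NormedAddCommGroup H] [InnerProductSpace ℂ H] [CompleteSpace H]
    (E : Submodule ℂ H) : H →L[ℂ] H :=
  if h : IsClosed (E : Set H) then
    haveI : CompleteSpace E := h.completeSpace_coe
    E.subtypeL.comp (Submodule.orthogonalProjectionOnto E)
  else 0

/-- A commutative subspace lattice: the orthogonal projections onto members commute. -/
structure IsCSL {H : Type*} [NormedAddCommGroup H] [InnerProductSpace ℂ H] [CompleteSpace H]
    (L : Set (Submodule ℂ H)) extends IsSubspaceLattice L : Prop where
  commutes : ∀ E ∈ L, ∀ F ∈ L, projOf E * projOf F = projOf F * projOf E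

/-- Complete distributivity of the lattice `L` (meets are intersections, joins are
closed linear spans). -/
def IsCompletelyDistributive {H : Type*} [NormedAddCommGroup H] [InnerProductSpace ℂ H]
    (L : Set (Submodule ℂ H)) : Prop :=
  ∀ (I : Type) (J : I → Type) (E : (i : I) → J i → Submodule ℂ H),
    (∀ i j, E i j ∈ L) →
     ((⨅ i, closedJoin (Set.range (E i)))
        = closedJoin (Set.range fun φ : (∀ i, J i) => ⨅ i, E i (φ i)))
    ∧ (closedJoin (Set.range fun i => ⨅ j, E i j)
        = ⨅ φ : (∀ i, J i), closedJoin (Set.range fun i => E i (φ i)))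

/-- `Alg L`: all bounded operators leaving every member of `L` invariant. -/
def algL {H : Type*} [NormedAddCommGroup H] [InnerProductSpace ℂ H]
    (L : Set (Submodule ℂ H)) : Set (H →L[ℂ] H) :=
  {T | ∀ E ∈ L, ∀ x ∈ E, T x ∈ E}

/-- The rank one operator `x ⊗ f* : h ↦ ⟨h, f⟩ x`. -/
def rankOne {H : Type*} [NormedAddCommGroup H] [InnerProductSpace ℂ H]
    (x f : H) : H →L[ℂ] H :=
  (innerSL ℂ f).smulRight x

/-- The rank of a bounded operator: the dimension of its range. -/
def opRank {H : Type*} [NormedAddCommGroup H] [InnerProductSpace ℂ H]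
    (T : H →L[ℂ] H) : Cardinal :=
  Module.rank ℂ (LinearMap.range (T : H →ₗ[ℂ] H))

/-- `Φ` is a linear map of `Alg L` into itself. -/
structure IsLinearOnAlg {H : Type*} [NormedAddCommGroup H] [InnerProductSpace ℂ H]
    (L : Set (Submodule ℂ H)) (Φ : (H →L[ℂ] H) → (H →L[ℂ] H)) : Prop where
  maps : ∀ A ∈ algL L, Φ A ∈ algL L
  map_add : ∀ A ∈ algL L, ∀ B ∈ algL L, Φ (A + B) = Φ A + Φ B
  map_smul : ∀ (c : ℂ), ∀ A ∈ algL L, Φ (c • A) = c • Φ A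

/-- `Φ` preserves the rank of every finite rank operator in `Alg L`. -/
def RankPreserving {H : Type*} [NormedAddCommGroup H] [InnerProductSpace ℂ H]
    (L : Set (Submodule ℂ H)) (Φ : (H →L[ℂ] H) → (H →L[ℂ] H)) : Prop :=
  ∀ A ∈ algL L, opRank A < Cardinal.aleph0 → opRank (Φ A) = opRank A

/-- `a ∼ b`: (nonzero) vectors `a` and `b` are linearly dependent. -/
def Dep {H : Type*} [NormedAddCommGroup H] [InnerProductSpace ℂ H] (a b : H) : Prop :=
  ∃ c : ℂ, c ≠ 0 ∧ b = c • a

/-- `N` is consistent with respect to `Φ`. -/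
def Consistent {H : Type*} [NormedAddCommGroup H] [InnerProductSpace ℂ H]
    (L : Set (Submodule ℂ H)) (Φ : (H →L[ℂ] H) → (H →L[ℂ] H))
    (N : Submodule ℂ H) : Prop :=
  N ≠ ⊥ ∧ minus L N ≠ ⊤ ∧
    ∃ (U : N →ₗ[ℂ] H) (V : ((minus L N)ᗮ : Submodule ℂ H) →ₗ[ℂ] H),
      ∀ (x : N) (f : ((minus L N)ᗮ : Submodule ℂ H)),
        Φ (rankOne (x : H) (f : H)) = rankOne (U x) (V f)

/-- `N` is twisted with respect to `Φ`. -/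
def Twisted {H : Type*} [NormedAddCommGroup H] [InnerProductSpace ℂ H]
    (L : Set (Submodule ℂ H)) (Φ : (H →L[ℂ] H) → (H →L[ℂ] H))
    (N : Submodule ℂ H) : Prop :=
  N ≠ ⊥ ∧ minus L N ≠ ⊤ ∧
    ∃ (U : ((minus L N)ᗮ : Submodule ℂ H) →ₗ⋆[ℂ] H) (V : N →ₗ⋆[ℂ] H),
      ∀ (x : N) (f : ((minus L N)ᗮ : Submodule ℂ H)),
        Φ (rankOne (x : H) (f : H)) = rankOne (U f) (V x)

/-- `N` is isolated: `dim N = 1` and `N^⊥ ∈ L`. -/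
def Isolated {H : Type*} [NormedAddCommGroup H] [InnerProductSpace ℂ H]
    (L : Set (Submodule ℂ H)) (N : Submodule ℂ H) : Prop :=
  Module.rank ℂ N = 1 ∧ Nᗮ ∈ L

/-- The family `F` of all `N ∈ L` with `N ≠ {0}` and `N₋ ≠ H`. -/
def famF {H : Type*} [NormedAddCommGroup H] [InnerProductSpace ℂ H]
    (L : Set (Submodule ℂ H)) : Set (Submodule ℂ H) :=
  {N | N ∈ L ∧ N ≠ ⊥ ∧ minus L N ≠ ⊤}

/-- Subspaces are comparable if one contains the other. -/
def Comparable' {H : Type*} [NormedAddCommGroup H] [InnerProductSpace ℂ H]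
    (M N : Submodule ℂ H) : Prop :=
  M ≤ N ∨ N ≤ M

/-- There is a chain in `F` from `M` to `N`. -/
def ChainConn {H : Type*} [NormedAddCommGroup H] [InnerProductSpace ℂ H]
    (L : Set (Submodule ℂ H)) (M N : Submodule ℂ H) : Prop :=
  ∃ (n : ℕ) (c : Fin (n + 1) → Submodule ℂ H),
    (∀ k, c k ∈ famF L) ∧ c 0 = M ∧ c (Fin.last n) = N ∧
      ∀ k : Fin n, Comparable' (c k.castSucc) (c k.succ)

/-- `𝔊_N`: all members of `F` that can be connected to `N` by a chain. -/
def GSet {H : Type*} [NormedAddCommGroup H] [InnerProductSpace ℂ H]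
    (L : Set (Submodule ℂ H)) (N : Submodule ℂ H) : Set (Submodule ℂ H) :=
  {M | M ∈ famF L ∧ ChainConn L N M}

end

/-!
In an orthonormal basis diagonalizing the commuting projections onto the members of `L`, `Alg L`
becomes the algebra of matrices supported on a preorder. Consistency says that on the matrix units
factoring through one index, `Φ` is `e_k ⊗ e_l* ↦ u_k ⊗ v_l*`; comparing the vectors attached to
different indices, `Φ` is, up to two invertible factors, entrywise multiplication by a matrix with
nonzero entries.

It remains to write that multiplier as `s k * t l` on the support, which is done one position
`(i, j)` at a time, the multiplier being already normalized to `1` on the earlier positions. Either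
a matrix supported on the earlier positions carries a unit flow from `i` to `j`; closing it up at
`(i, j)` gives a matrix whose rank rises when that entry changes, so the multiplier is `1` there
too. Or the earlier positions separate `i` from `j`, and then rescaling one side of the cut
normalizes the new entry for free.
-/

section SupportedMatrices

open Matrix

variable {m n K : Type*} [CommSemiring K]

variable (K) in
/-- The space of matrices whose entries vanish outside the set of positions `R`. With `R` a preorder
this is the incidence algebra which models `Alg L` in an adapted basis; rectangular matrices and
arbitrary `R` are allowed since the rank arguments below add one position at a time. -/
def supportedMatrices (R : Set (m × n)) : Submodule K (Matrix m n K) where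
  carrier := {A | ∀ i j, (i, j) ∉ R → A i j = 0}
  zero_mem' _ _ _ := rfl
  add_mem' hA hB i j h := by simp [hA i j h, hB i j h]
  smul_mem' c A hA i j h := by simp [hA i j h]

theorem supportedMatrices_mono {R S : Set (m × n)} (h : R ⊆ S) :
    supportedMatrices K R ≤ supportedMatrices K S :=
  fun _ hA i j hij => hA i j (mt (@h _) hij)

variable [DecidableEq m] [DecidableEq n]

theorem single_mem_supportedMatrices {R : Set (m × n)} {i : m} {j : n} (h : (i, j) ∈ R) (c : K) :
    single i j c ∈ supportedMatrices K R := fun k l hkl =>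
  single_apply_of_ne _ _ _ _ _ (by rintro ⟨rfl, rfl⟩; exact hkl h)

theorem one_mem_supportedMatrices {R : Set (n × n)} (hR : ∀ i, (i, i) ∈ R) :
    (1 : Matrix n n K) ∈ supportedMatrices K R := fun i j hij =>
  one_apply_ne (by rintro rfl; exact hij (hR i))

theorem hadamard_eq_diagonal_mul_mul_diagonal [Fintype m] [Fintype n] {R : Set (m × n)}
    {A C : Matrix m n K} (hA : A ∈ supportedMatrices K R) {s : m → K} {t : n → K}
    (hC : ∀ i j, (i, j) ∈ R → C i j = s i * t j) :
    C ⊙ A = diagonal s * A * diagonal t := by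
  ext i j
  rw [hadamard_apply, mul_diagonal, diagonal_mul]
  by_cases hij : (i, j) ∈ R
  · rw [hC i j hij]; ring
  · rw [hA i j hij]; ring

end SupportedMatrices

section MatrixUnits

open Matrix

variable {m n K : Type*} [CommSemiring K] [DecidableEq m] [DecidableEq n]

theorem hadamard_single (C : Matrix m n K) (i : m) (j : n) (c : K) :
    C ⊙ single i j c = single i j (C i j * c) := by
  ext k l
  rw [hadamard_apply, single_apply, single_apply, mul_ite, mul_zero]
  split_ifs with h
  · rw [h.1, h.2]
  · rfl

theorem single_mulVec_eq_single [Fintype n] (i : m) (j : n) (c : K) (x : n → K) :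
    single i j c *ᵥ x = Pi.single i (c * x j) :=
  single_mulVec i j c x

theorem vecMul_single_eq_single [Fintype m] (i : m) (j : n) (c : K) (y : m → K) :
    y ᵥ* single i j c = Pi.single j (y i * c) := by
  ext l
  simp [vecMul, dotProduct, single_apply, Pi.single_apply, ite_and, eq_comm]

variable [Fintype m] [Fintype n]

theorem diagonal_mul_single_mul_diagonal (s : m → K) (t : n → K) (i : m) (j : n) (c : K) :
    diagonal s * single i j c * diagonal t = single i j (s i * c * t j) := by
  ext k l
  rw [mul_diagonal, diagonal_mul, single_apply, single_apply]
  split_ifs with h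
  · rw [h.1, h.2]
  · rw [mul_zero, zero_mul]

theorem linearMap_apply_eq_sum {M : Type*} [AddCommMonoid M] [Module K M]
    (φ : Matrix m n K →ₗ[K] M) (A : Matrix m n K) :
    φ A = ∑ i, ∑ j, A i j • φ (single i j 1) := by
  conv_lhs => rw [matrix_eq_sum_single A]
  simp only [map_sum, ← map_smul, smul_single, smul_eq_mul, mul_one]

end MatrixUnits

section RankOfMatrix

open Matrix

variable {m n K : Type*} [Field K]

theorem exists_vecMulVec_eq_smul_of_vecMulVec_eq {x x' : m → K} {y y' : n → K}
    (h : vecMulVec x y = vecMulVec x' y') : ∃ c : K, vecMulVec x y = c • vecMulVec x y' := by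
  by_cases hy' : y' = 0
  · exact ⟨0, by rw [h, hy']; ext; simp [vecMulVec_apply]⟩
  obtain ⟨l, hl⟩ := Function.ne_iff.mp hy'
  have hx' : x' = (y l / y' l) • x := by
    ext k
    have hkl : x k * y l = x' k * y' l := congrFun₂ h k l
    rw [Pi.smul_apply, smul_eq_mul, div_mul_eq_mul_div, mul_comm, hkl]
    exact (mul_div_cancel_right₀ _ hl).symm
  exact ⟨y l / y' l, by rw [h, ← smul_vecMulVec, ← hx']⟩

variable [Fintype m] [Fintype n] [DecidableEq m] [DecidableEq n]

theorem isUnit_diagonal_units {α : Type*} [CommRing α] (s : n → αˣ) :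
    IsUnit (diagonal fun i => (s i : α)) :=
  isUnit_diagonal.mpr (Pi.isUnit_iff.mpr fun i => (s i).isUnit)

theorem rank_mul_mul_of_isUnit {α : Type*} [CommRing α] {P : Matrix m m α} {Q : Matrix n n α}
    (hP : IsUnit P) (hQ : IsUnit Q) (A : Matrix m n α) : (P * A * Q).rank = A.rank := by
  rw [rank_mul_eq_left_of_isUnit_det _ _ ((isUnit_iff_isUnit_det Q).mp hQ),
    rank_mul_eq_right_of_isUnit_det _ _ ((isUnit_iff_isUnit_det P).mp hP)]

theorem isUnit_of_rank_eq_card {A : Matrix n n K} (h : A.rank = Fintype.card n) : IsUnit A := by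
  rw [← mulVec_surjective_iff_isUnit, ← coe_mulVecLin, ← LinearMap.range_eq_top]
  exact Submodule.eq_top_of_finrank_eq (by rw [Module.finrank_fintype_fun_eq_card]; exact h)

theorem rank_lt_rank_add_single {A : Matrix m n K} {x : n → K} {y : m → K} (hx : A *ᵥ x = 0)
    (hy : y ᵥ* A = 0) {i : m} {j : n} (hyi : y i ≠ 0) (hxj : x j ≠ 0) {c : K} (hc : c ≠ 0) :
    A.rank < (A + single i j c).rank := by
  have mulVec_add_single (u : n → K) :
      (A + single i j c) *ᵥ u = A *ᵥ u + Pi.single i (c * u j) := by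
    rw [add_mulVec, single_mulVec_eq_single]
  have hker : LinearMap.ker (A + single i j c).mulVecLin < LinearMap.ker A.mulVecLin := by
    refine SetLike.lt_iff_le_and_exists.mpr ⟨fun u hu => ?_, x, hx, fun hx' => ?_⟩
    · have hu : A *ᵥ u + Pi.single i (c * u j) = 0 := (mulVec_add_single u).symm.trans hu
      have huj : u j = 0 := by
        simpa [dotProduct_add, dotProduct_mulVec, hy, hyi, hc] using congrArg (y ⬝ᵥ ·) hu
      simpa [huj] using hu
    · have hx' : A *ᵥ x + Pi.single i (c * x j) = 0 := (mulVec_add_single x).symm.trans hx'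
      simp [hx, hc, hxj] at hx'
  have hlt := Submodule.finrank_lt_finrank_of_lt hker
  have hA := A.mulVecLin.finrank_range_add_finrank_ker
  have hB := (A + single i j c).mulVecLin.finrank_range_add_finrank_ker
  simp only [Matrix.rank]
  omega

end RankOfMatrix

section Flow

open Matrix

variable {m n K : Type*} [CommRing K] [Fintype m] [Fintype n] [DecidableEq m] [DecidableEq n]

variable (K) in
/- In the bipartite graph with edge set `R`, either a unit flow runs from the row `i` to the
column `j`, or a union of connected components contains `i` but not `j`. -/
theorem exists_flow_or_exists_separation (R : Set (m × n)) (i : m) (j : n) :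
    (∃ A ∈ supportedMatrices K R, A *ᵥ 1 = Pi.single i 1 ∧ 1 ᵥ* A = Pi.single j 1) ∨
    ∃ (P : Set m) (Q : Set n), i ∈ P ∧ j ∉ Q ∧ ∀ k l, (k, l) ∈ R → (k ∈ P ↔ l ∈ Q) := by
  let P : Set m := {k | ∃ A ∈ supportedMatrices K R,
    A *ᵥ 1 = Pi.single i 1 - Pi.single k 1 ∧ 1 ᵥ* A = 0}
  let Q : Set n := {l | ∃ A ∈ supportedMatrices K R,
    A *ᵥ 1 = Pi.single i 1 ∧ 1 ᵥ* A = Pi.single l 1}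
  by_cases hj : j ∈ Q
  · exact .inl hj
  refine .inr ⟨P, Q, ⟨0, zero_mem _, by simp, by simp⟩, hj, fun k l hkl => ⟨?_, ?_⟩⟩
  · rintro ⟨A, hA, hrow, hcol⟩
    refine ⟨A + single k l 1, add_mem hA (single_mem_supportedMatrices hkl 1), ?_, ?_⟩
    · simp [add_mulVec, hrow, single_mulVec_eq_single]
    · simp [vecMul_add, hcol, vecMul_single_eq_single]
  · rintro ⟨A, hA, hrow, hcol⟩
    refine ⟨A - single k l 1, sub_mem hA (single_mem_supportedMatrices hkl 1), ?_, ?_⟩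
    · simp [sub_mulVec, hrow, single_mulVec_eq_single]
    · simp [vecMul_sub, hcol, vecMul_single_eq_single]

end Flow

section Scaling

open Matrix

variable {m n K : Type*} [Field K]

/- The flow closed up by `-single i j 1` is a matrix with zero row and column sums; changing its
`(i, j)` entry raises its rank, so the multiplier cannot rescale that entry. -/
theorem eq_mul_of_flow [Fintype m] [Fintype n] [DecidableEq m] [DecidableEq n]
    {R : Set (m × n)} {i : m} {j : n} {A : Matrix m n K}
    (hA : A ∈ supportedMatrices K R) (hrow : A *ᵥ 1 = Pi.single i 1)
    (hcol : 1 ᵥ* A = Pi.single j 1) {C : Matrix m n K}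
    (hC : ∀ A ∈ supportedMatrices K (insert (i, j) R), (C ⊙ A).rank = A.rank)
    {s : m → Kˣ} {t : n → Kˣ} (hst : ∀ k l, (k, l) ∈ R → C k l = s k * t l) :
    C i j = s i * t j := by
  let B := A + single i j (-1)
  have hB : B ∈ supportedMatrices K (insert (i, j) R) :=
    add_mem (supportedMatrices_mono (Set.subset_insert _ _) hA)
      (single_mem_supportedMatrices (Set.mem_insert _ _) _)
  have hBrow : B *ᵥ 1 = 0 := by
    simp [B, add_mulVec, hrow, single_mulVec_eq_single, ← Pi.single_add]
  have hBcol : 1 ᵥ* B = 0 := by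
    simp [B, vecMul_add, hcol, vecMul_single_eq_single, ← Pi.single_add]
  by_contra hne
  let γ : K := C i j / (s i * t j)
  have hγ : 1 - γ ≠ 0 := by
    rw [sub_ne_zero, ne_comm, Ne, div_eq_one_iff_eq (mul_ne_zero (s i).ne_zero (t j).ne_zero)]
    exact hne
  have hCB : C ⊙ B = diagonal (fun k => (s k : K)) * (B + single i j (1 - γ)) *
      diagonal fun l => (t l : K) := by
    have hCij : s i * γ * t j = C i j := by simp only [γ]; field_simp
    have hBγ : B + single i j (1 - γ) = A + single i j (-γ) := by
      rw [add_assoc, ← single_add, sub_eq_add_neg, neg_add_cancel_left]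
    rw [hBγ, Matrix.mul_add, Matrix.add_mul, diagonal_mul_single_mul_diagonal,
      ← hadamard_eq_diagonal_mul_mul_diagonal hA hst, hadamard_add, hadamard_single, mul_neg_one,
      mul_neg, neg_mul, hCij]
  have hlt := rank_lt_rank_add_single hBrow hBcol one_ne_zero one_ne_zero hγ (i := i) (j := j)
  rw [← rank_mul_mul_of_isUnit (isUnit_diagonal_units s) (isUnit_diagonal_units t)
    (B + single i j (1 - γ)), ← hCB, hC B hB] at hlt
  exact hlt.false

theorem apply_ne_zero_of_rank_hadamard [Finite m] [Fintype n] {R : Set (m × n)} {C : Matrix m n K}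
    (hC : ∀ A ∈ supportedMatrices K R, (C ⊙ A).rank = A.rank) {i : m} {j : n} (h : (i, j) ∈ R) :
    C i j ≠ 0 := by
  classical
  cases nonempty_fintype m
  intro hzero
  have hrank := hC _ (single_mem_supportedMatrices h 1)
  rw [hadamard_single, hzero, zero_mul, single_zero] at hrank
  have hlt := rank_lt_rank_add_single (A := 0) (x := 1) (y := 1) (zero_mulVec _)
    (vecMul_zero _) (i := i) (j := j) one_ne_zero one_ne_zero (one_ne_zero (α := K))
  rw [zero_add] at hlt
  exact hlt.ne hrank

theorem exists_scaling_insert_of_separation {R : Set (m × n)} {i : m} {j : n} {C : Matrix m n K}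
    (hCij : C i j ≠ 0) {s : m → Kˣ} {t : n → Kˣ} (hst : ∀ k l, (k, l) ∈ R → C k l = s k * t l)
    {P : Set m} {Q : Set n} (hi : i ∈ P) (hj : j ∉ Q)
    (hPQ : ∀ k l, (k, l) ∈ R → (k ∈ P ↔ l ∈ Q)) :
    ∃ (s : m → Kˣ) (t : n → Kˣ), ∀ k l, (k, l) ∈ insert (i, j) R → C k l = s k * t l := by
  classical
  let γ : Kˣ := Units.mk0 (C i j) hCij * (s i * t j)⁻¹
  have hγ : s i * γ * t j = C i j := by
    simp only [γ, Units.val_mul, Units.val_mk0, Units.val_inv_eq_inv_val]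
    field_simp
  refine ⟨fun k => if k ∈ P then s k * γ else s k, fun l => if l ∈ Q then t l * γ⁻¹ else t l,
    fun k l hkl => ?_⟩
  rcases hkl with hkl | hkl
  · obtain ⟨rfl, rfl⟩ := Prod.mk.inj hkl
    simp [hi, hj, hγ]
  · by_cases hk : k ∈ P
    · simp [hk, (hPQ k l hkl).mp hk, hst k l hkl, mul_mul_mul_comm]
    · simp [hk, mt (hPQ k l hkl).mpr hk, hst k l hkl]

theorem exists_scaling_insert [Finite m] [Fintype n] {R : Set (m × n)} {i : m} {j : n}
    {C : Matrix m n K} (hC : ∀ A ∈ supportedMatrices K (insert (i, j) R), (C ⊙ A).rank = A.rank)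
    (hR : ∃ (s : m → Kˣ) (t : n → Kˣ), ∀ k l, (k, l) ∈ R → C k l = s k * t l) :
    ∃ (s : m → Kˣ) (t : n → Kˣ), ∀ k l, (k, l) ∈ insert (i, j) R → C k l = s k * t l := by
  classical
  cases nonempty_fintype m
  obtain ⟨s, t, hst⟩ := hR
  rcases exists_flow_or_exists_separation K R i j with ⟨A, hA, hrow, hcol⟩ | ⟨P, Q, hi, hj, hPQ⟩
  · refine ⟨s, t, fun k l hkl => ?_⟩
    rcases hkl with hkl | hkl
    · obtain ⟨rfl, rfl⟩ := Prod.mk.inj hkl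
      exact eq_mul_of_flow hA hrow hcol hC hst
    · exact hst k l hkl
  · exact exists_scaling_insert_of_separation
      (apply_ne_zero_of_rank_hadamard hC (Set.mem_insert _ _)) hst hi hj hPQ

theorem exists_scaling_of_rank_hadamard [Finite m] [Fintype n] {R : Set (m × n)} {C : Matrix m n K}
    (hC : ∀ A ∈ supportedMatrices K R, (C ⊙ A).rank = A.rank) :
    ∃ (s : m → Kˣ) (t : n → Kˣ), ∀ i j, (i, j) ∈ R → C i j = s i * t j := by
  induction R, R.toFinite using Set.Finite.induction_on with
  | empty => exact ⟨1, 1, fun _ _ h => h.elim⟩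
  | insert _ _ ih =>
    exact exists_scaling_insert hC
      (ih fun A hA => hC A (supportedMatrices_mono (Set.subset_insert _ _) hA))

end Scaling

section RankPreserver

open Matrix

variable {n K : Type*} [Field K] [Fintype n] [DecidableEq n]

theorem exists_eq_mul_hadamard_mul {R : Set (n × n)} (hR : ∀ i, (i, i) ∈ R)
    {φ : Matrix n n K →ₗ[K] Matrix n n K}
    (hφ : ∀ i, ∃ U V : n → n → K, ∀ k l, (k, i) ∈ R → (i, l) ∈ R →
      φ (single k l 1) = vecMulVec (U k) (V l)) :
    ∃ P Q C : Matrix n n K, ∀ A ∈ supportedMatrices K R, φ A = P * (C ⊙ A) * Q := by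
  choose U V hUV using hφ
  have hsmul (i j) : ∃ c : K, (i, j) ∈ R →
      φ (single i j 1) = c • vecMulVec (U i i) (V j j) := by
    by_cases hij : (i, j) ∈ R
    · have hi := hUV i i j (hR i) hij
      have hj := hUV j i j hij (hR j)
      obtain ⟨c, hc⟩ := exists_vecMulVec_eq_smul_of_vecMulVec_eq (hi.symm.trans hj)
      exact ⟨c, fun _ => hi.trans hc⟩
    · exact ⟨0, fun h => absurd h hij⟩
  choose c hc using hsmul
  let P : Matrix n n K := of fun k i => U i i k
  let Q : Matrix n n K := of fun j k => V j j k
  have hPQ (i j : n) : P * single i j 1 * Q = vecMulVec (U i i) (V j j) := by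
    rw [single_eq_single_vecMulVec_single, mul_vecMulVec, vecMulVec_mul, mulVec_single_one,
      single_one_vecMul]
    rfl
  have hterm (i j : n) {a : K} (ha : (i, j) ∉ R → a = 0) :
      a • φ (single i j 1) = (c i j * a) • (P * single i j 1 * Q) := by
    by_cases hij : (i, j) ∈ R
    · rw [hPQ, hc i j hij, smul_smul, mul_comm]
    · rw [ha hij, zero_smul, mul_zero, zero_smul]
  refine ⟨P, Q, of c, fun A hA => ?_⟩
  calc φ A = ∑ i, ∑ j, A i j • φ (single i j 1) := linearMap_apply_eq_sum φ A
    _ = ∑ i, ∑ j, (of c ⊙ A) i j • (P * single i j 1 * Q) :=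
      Finset.sum_congr rfl fun i _ => Finset.sum_congr rfl fun j _ => hterm i j (hA i j)
    _ = P * (of c ⊙ A) * Q :=
      (linearMap_apply_eq_sum (LinearMap.mulRight K Q ∘ₗ LinearMap.mulLeft K P) _).symm

theorem exists_units_eq_mul_mul_of_rank_eq {R : Set (n × n)} (hR : ∀ i, (i, i) ∈ R)
    {φ : Matrix n n K →ₗ[K] Matrix n n K}
    (hrank : ∀ A ∈ supportedMatrices K R, (φ A).rank = A.rank)
    (hφ : ∀ i, ∃ U V : n → n → K, ∀ k l, (k, i) ∈ R → (i, l) ∈ R →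
      φ (single k l 1) = vecMulVec (U k) (V l)) :
    ∃ P Q : (Matrix n n K)ˣ, ∀ A ∈ supportedMatrices K R, φ A = P * A * Q := by
  obtain ⟨P, Q, C, hPQ⟩ := exists_eq_mul_hadamard_mul hR hφ
  have hone := one_mem_supportedMatrices (K := K) hR
  have hunit : IsUnit (P * (C ⊙ 1) * Q) := by
    rw [← hPQ 1 hone]
    exact isUnit_of_rank_eq_card (by rw [hrank 1 hone, rank_one])
  have hQ : IsUnit Q := isUnit_of_mul_isUnit_right hunit
  have hP : IsUnit P := isUnit_of_mul_isUnit_left (isUnit_of_mul_isUnit_left hunit)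
  have hC : ∀ A ∈ supportedMatrices K R, (C ⊙ A).rank = A.rank := fun A hA => by
    rw [← rank_mul_mul_of_isUnit hP hQ, ← hPQ A hA, hrank A hA]
  obtain ⟨s, t, hst⟩ := exists_scaling_of_rank_hadamard hC
  refine ⟨hP.unit * (isUnit_diagonal_units s).unit, (isUnit_diagonal_units t).unit * hQ.unit,
    fun A hA => ?_⟩
  rw [hPQ A hA, hadamard_eq_diagonal_mul_mul_diagonal hA hst]
  simp only [Units.val_mul, IsUnit.unit_spec, mul_assoc]

end RankPreserver

section AdaptedBasis

variable {𝕜 E ι : Type*} [RCLike 𝕜] [NormedAddCommGroup E] [InnerProductSpace 𝕜 E]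
  [FiniteDimensional 𝕜 E]

theorem exists_orthonormalBasis_of_iSup_eq_top {V : ι → Submodule 𝕜 E}
    (hV : OrthogonalFamily 𝕜 (fun i => V i) fun i => (V i).subtypeₗᵢ) (htop : ⨆ i, V i = ⊤) :
    ∃ b : OrthonormalBasis (Fin (Module.finrank 𝕜 E)) 𝕜 E, ∀ k, ∃ i, b k ∈ V i := by
  classical
  let W : {i // V i ≠ ⊥} → Submodule 𝕜 E := fun i => V i
  have hW : OrthogonalFamily 𝕜 (fun i => W i) fun i => (W i).subtypeₗᵢ :=
    hV.comp Subtype.coe_injective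
  have : Finite {i // V i ≠ ⊥} := WellFoundedGT.finite_ne_bot_of_iSupIndep hV.independent
  cases nonempty_fintype {i // V i ≠ ⊥}
  have hint : DirectSum.IsInternal W := by
    rw [hW.isInternal_iff, iSup_ne_bot_subtype V, htop, Submodule.top_orthogonal_eq_bot]
  exact ⟨hint.subordinateOrthonormalBasis rfl hW, fun k =>
    ⟨_, hint.subordinateOrthonormalBasis_subordinate rfl k hW⟩⟩

theorem exists_orthonormalBasis_mem_or_mem_orthogonal {V : ι → Submodule 𝕜 E}
    (hV : ∀ i j, Commute (V i).starProjection (V j).starProjection) :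
    ∃ b : OrthonormalBasis (Fin (Module.finrank 𝕜 E)) 𝕜 E, ∀ i k, b k ∈ V i ∨ b k ∈ (V i)ᗮ := by
  let T : ι → E →ₗ[𝕜] E := fun i => (V i).starProjection
  have hsymm (i) : (T i).IsSymmetric := (V i).starProjection_isSymmetric
  have hcomm : Pairwise (Function.onFun Commute T) := fun i j _ =>
    congrArg ContinuousLinearMap.toLinearMap (hV i j)
  obtain ⟨b, hb⟩ := exists_orthonormalBasis_of_iSup_eq_top
    (LinearMap.IsSymmetric.orthogonalFamily_iInf_eigenspaces hsymm)
    (LinearMap.IsSymmetric.iSup_iInf_eq_top_of_commute hsymm hcomm)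
  refine ⟨b, fun i k => ?_⟩
  obtain ⟨χ, hχ⟩ := hb k
  have heigen : (V i).starProjection (b k) = χ i • b k :=
    Module.End.mem_eigenspace_iff.mp ((Submodule.mem_iInf _).mp hχ i)
  rcases eq_or_ne (χ i) 0 with hzero | hne
  · right
    rw [← Submodule.starProjection_apply_eq_zero_iff, heigen, hzero, zero_smul]
  · left
    rw [← Submodule.smul_mem_iff _ hne, ← heigen]
    exact (V i).starProjection_apply_mem _

end AdaptedBasis

section OperatorMatrix

variable {H ι : Type*} [NormedAddCommGroup H] [InnerProductSpace ℂ H] [FiniteDimensional ℂ H]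
  [Fintype ι] [DecidableEq ι]

/-- The matrix of a continuous operator in an orthonormal basis, as an algebra isomorphism. -/
noncomputable def operatorMatrix (b : OrthonormalBasis ι ℂ H) : (H →L[ℂ] H) ≃ₐ[ℂ] Matrix ι ι ℂ :=
  (Module.End.toContinuousLinearMap H).symm.trans (LinearMap.toMatrixAlgEquiv b.toBasis)

theorem operatorMatrix_apply (b : OrthonormalBasis ι ℂ H) (T : H →L[ℂ] H) (i j : ι) :
    operatorMatrix b T i j = ⟪b i, T (b j)⟫_ℂ :=
  LinearMap.toMatrixOrthonormal_apply_apply b (T : H →ₗ[ℂ] H) i j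

theorem operatorMatrix_rankOne (b : OrthonormalBasis ι ℂ H) (x f : H) :
    operatorMatrix b (rankOne x f) = Matrix.vecMulVec (b.repr x) (star (b.repr f)) :=
  InnerProductSpace.toMatrix_rankOne x f b.toBasis b

theorem operatorMatrix_rankOne_basis (b : OrthonormalBasis ι ℂ H) (i j : ι) :
    operatorMatrix b (rankOne (b i) (b j)) = Matrix.single i j 1 := by
  rw [operatorMatrix_rankOne, Matrix.single_eq_single_vecMulVec_single]
  simp

theorem opRank_eq_rank_operatorMatrix (b : OrthonormalBasis ι ℂ H) (T : H →L[ℂ] H) :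
    opRank T = (operatorMatrix b T).rank := by
  rw [Matrix.rank_eq_finrank_range_toLin _ b.toBasis b.toBasis, Module.finrank_eq_rank]
  exact congrArg (fun f : H →ₗ[ℂ] H => Module.rank ℂ (LinearMap.range f))
    (Matrix.toLin_toMatrix b.toBasis b.toBasis (T : H →ₗ[ℂ] H)).symm

end OperatorMatrix

section AlgL

variable {H ι : Type*} [NormedAddCommGroup H] [InnerProductSpace ℂ H]
  {L : Set (Submodule ℂ H)}

/-- `Alg L` as a subalgebra of the algebra of bounded operators. -/
def algSubalgebra (L : Set (Submodule ℂ H)) : Subalgebra ℂ (H →L[ℂ] H) where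
  carrier := algL L
  mul_mem' hA hB E hE x hx := hA E hE _ (hB E hE x hx)
  add_mem' hA hB E hE x hx := E.add_mem (hA E hE x hx) (hB E hE x hx)
  algebraMap_mem' c E _ _ hx := E.smul_mem c hx

theorem IsLinearOnAlg.exists_linearMap_eqOn {Φ : (H →L[ℂ] H) → (H →L[ℂ] H)}
    (hΦ : IsLinearOnAlg L Φ) :
    ∃ Ψ : (H →L[ℂ] H) →ₗ[ℂ] (H →L[ℂ] H), Set.EqOn Ψ Φ (algL L) := by
  let Φ' : Subalgebra.toSubmodule (algSubalgebra L) →ₗ[ℂ] (H →L[ℂ] H) :=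
    { toFun := fun A => Φ A
      map_add' := fun A B => hΦ.map_add A A.2 B B.2
      map_smul' := fun c A => hΦ.map_smul c A A.2 }
  obtain ⟨Ψ, hΨ⟩ := Φ'.exists_extend
  exact ⟨Ψ, fun A hA => LinearMap.congr_fun hΨ ⟨A, hA⟩⟩

/-- The smallest member of `L` containing `x`, when `L` is closed under intersections. -/
def latticeHull (L : Set (Submodule ℂ H)) (x : H) : Submodule ℂ H :=
  sInf {E | E ∈ L ∧ x ∈ E}

/-- The pairs `(i, j)` such that every member of `L` containing `b j` contains `b i`. For an
orthonormal basis adapted to `L` these index the matrix units belonging to `Alg L`. -/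
def basisPreorder (L : Set (Submodule ℂ H)) (b : ι → H) : Set (ι × ι) :=
  {p | ∀ E ∈ L, b p.2 ∈ E → b p.1 ∈ E}

theorem basisPreorder_trans {b : ι → H} {i j k : ι} (hij : (i, j) ∈ basisPreorder L b)
    (hjk : (j, k) ∈ basisPreorder L b) : (i, k) ∈ basisPreorder L b :=
  fun E hE hk => hij E hE (hjk E hE hk)

theorem mem_latticeHull_of_mem_basisPreorder {b : ι → H} {k i : ι}
    (h : (k, i) ∈ basisPreorder L b) : b k ∈ latticeHull L (b i) :=
  Submodule.mem_sInf.mpr fun E hE => h E hE.1 hE.2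

/-- Every vector of the family lies in or is orthogonal to each member of `L`, that is, the
projections onto the members of `L` are diagonal in `b`. -/
def IsAdapted (L : Set (Submodule ℂ H)) (b : ι → H) : Prop :=
  ∀ E ∈ L, ∀ k, b k ∈ E ∨ b k ∈ Eᗮ

namespace IsAdapted

theorem mem_orthogonal_minus_latticeHull {b : ι → H} (hb : IsAdapted L b) {i j : ι}
    (h : (i, j) ∈ basisPreorder L b) : b j ∈ (minus L (latticeHull L (b i)))ᗮ := by
  rw [minus, closedJoin, Submodule.orthogonal_closure, ← Submodule.sInf_orthogonal]
  simp only [Submodule.mem_iInf]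
  rintro E ⟨hE, hle⟩
  have hi : b i ∉ E := fun hi => hle (sInf_le ⟨hE, hi⟩)
  exact (hb E hE j).resolve_left fun hj => hi (h E hE hj)

theorem not_latticeHull_le_minus {b : ι → H} (hb : IsAdapted L b) {i : ι} (hi : b i ≠ 0) :
    ¬ latticeHull L (b i) ≤ minus L (latticeHull L (b i)) := fun hle =>
  have hrefl : (i, i) ∈ basisPreorder L b := fun _ _ h => h
  have hmem := hle (mem_latticeHull_of_mem_basisPreorder hrefl)
  hi (inner_self_eq_zero.mp (hb.mem_orthogonal_minus_latticeHull hrefl _ hmem))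

variable [Fintype ι] {b : OrthonormalBasis ι ℂ H}

theorem mem_iff (hb : IsAdapted L b) {E : Submodule ℂ H} (hE : E ∈ L) {x : H} :
    x ∈ E ↔ ∀ k, b k ∉ E → ⟪b k, x⟫_ℂ = 0 := by
  refine ⟨fun hx k hk => Submodule.inner_left_of_mem_orthogonal hx ((hb E hE k).resolve_left hk),
    fun h => ?_⟩
  rw [← b.sum_repr' x]
  refine E.sum_mem fun k _ => ?_
  by_cases hk : b k ∈ E
  · exact E.smul_mem _ hk
  · rw [h k hk, zero_smul]
    exact E.zero_mem

theorem mem_algL_iff [FiniteDimensional ℂ H] [DecidableEq ι] (hb : IsAdapted L b)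
    {T : H →L[ℂ] H} :
    T ∈ algL L ↔ operatorMatrix b T ∈ supportedMatrices ℂ (basisPreorder L b) := by
  constructor
  · intro hT i j hij
    obtain ⟨E, hE, hj, hi⟩ : ∃ E ∈ L, b j ∈ E ∧ b i ∉ E := by
      simpa [basisPreorder] using hij
    rw [operatorMatrix_apply]
    exact (hb.mem_iff hE).mp (hT E hE _ hj) i hi
  · intro hT E hE x hx
    refine (hb.mem_iff hE).mpr fun i hi => ?_
    rw [← b.sum_repr' x, map_sum, inner_sum]
    refine Finset.sum_eq_zero fun j _ => ?_
    rw [map_smul, inner_smul_right]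
    by_cases hj : b j ∈ E
    · rw [← operatorMatrix_apply, hT i j fun h => hi (h E hE hj), mul_zero]
    · rw [(hb.mem_iff hE).mp hx j hj, zero_mul]

end IsAdapted

end AlgL

section RankPreservingMaps

variable {H : Type*} [NormedAddCommGroup H] [InnerProductSpace ℂ H] [FiniteDimensional ℂ H]
  {L : Set (Submodule ℂ H)}

theorem projOf_eq_starProjection (E : Submodule ℂ H) : projOf E = E.starProjection :=
  dif_pos E.closed_of_finiteDimensional

theorem exists_orthonormalBasis_isAdapted
    (hcomm : ∀ E ∈ L, ∀ F ∈ L, Commute (projOf E) (projOf F)) :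
    ∃ b : OrthonormalBasis (Fin (Module.finrank ℂ H)) ℂ H, IsAdapted L b := by
  simp only [projOf_eq_starProjection] at hcomm
  obtain ⟨b, hb⟩ := exists_orthonormalBasis_mem_or_mem_orthogonal
    (V := fun E : L => (E : Submodule ℂ H)) fun E F => hcomm E E.2 F F.2
  exact ⟨b, fun E hE => hb ⟨E, hE⟩⟩

theorem mem_algL_of_mul_eq_one {P Q : H →L[ℂ] H} (hP : P ∈ algL L) (hQP : Q * P = 1) :
    Q ∈ algL L := by
  intro E hE x hx
  have hleft : Function.LeftInverse Q P := fun y => congrArg (fun T : H →L[ℂ] H => T y) hQP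
  have hmap : E.map (P : H →ₗ[ℂ] H) = E :=
    Submodule.eq_of_le_of_finrank_eq (Submodule.map_le_iff_le_comap.mpr (hP E hE))
      (E.equivMapOfInjective _ hleft.injective).finrank_eq.symm
  obtain ⟨y, hy, rfl⟩ := hmap.ge hx
  exact (hleft y).symm ▸ hy

variable {ι : Type*} [Fintype ι] {b : OrthonormalBasis ι ℂ H} {Φ : (H →L[ℂ] H) → (H →L[ℂ] H)}

theorem Consistent.exists_operatorMatrix_eq_vecMulVec [DecidableEq ι] (hb : IsAdapted L b) {i : ι}
    (hΦ : Consistent L Φ (latticeHull L (b i))) :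
    ∃ u v : ι → ι → ℂ, ∀ k l, (k, i) ∈ basisPreorder L b → (i, l) ∈ basisPreorder L b →
      operatorMatrix b (Φ (rankOne (b k) (b l))) = Matrix.vecMulVec (u k) (v l) := by
  classical
  obtain ⟨-, -, U, V, hUV⟩ := hΦ
  refine ⟨fun k => if h : (k, i) ∈ basisPreorder L b then
      b.repr (U ⟨b k, mem_latticeHull_of_mem_basisPreorder h⟩) else 0,
    fun l => if h : (i, l) ∈ basisPreorder L b then
      star (b.repr (V ⟨b l, hb.mem_orthogonal_minus_latticeHull h⟩) : ι → ℂ) else 0,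
    fun k l hk hl => ?_⟩
  simp only [dif_pos hk, dif_pos hl, ← operatorMatrix_rankOne, ← hUV]

theorem exists_units_eq_mul_mul_of_rankPreserving
    (hinf : ∀ S ⊆ L, sInf S ∈ L) (hb : IsAdapted L b) (hlin : IsLinearOnAlg L Φ)
    (hrank : RankPreserving L Φ) (hcons : ∀ N ∈ L, ¬ N ≤ minus L N → Consistent L Φ N) :
    ∃ P Q : (H →L[ℂ] H)ˣ, ∀ A ∈ algL L, Φ A = P * A * Q := by
  classical
  obtain ⟨Ψ, hΨ⟩ := hlin.exists_linearMap_eqOn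
  let M := operatorMatrix b
  let φ : Matrix ι ι ℂ →ₗ[ℂ] Matrix ι ι ℂ :=
    M.toLinearMap ∘ₗ Ψ ∘ₗ M.symm.toLinearMap
  have hφ {A} (hA : A ∈ algL L) : φ (M A) = M (Φ A) := by
    simp [φ, hΨ hA]
  have hφrank : ∀ A ∈ supportedMatrices ℂ (basisPreorder L b), (φ A).rank = A.rank := by
    intro A hA
    obtain ⟨T, rfl⟩ := M.surjective A
    have hT : T ∈ algL L := hb.mem_algL_iff.mpr hA
    have h := hrank T hT (Module.rank_lt_aleph0 ℂ _)
    rw [opRank_eq_rank_operatorMatrix b, opRank_eq_rank_operatorMatrix b, Nat.cast_inj] at h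
    rw [hφ hT, h]
  have hφlocal (i : ι) : ∃ u v : ι → ι → ℂ, ∀ k l, (k, i) ∈ basisPreorder L b →
      (i, l) ∈ basisPreorder L b → φ (Matrix.single k l 1) = Matrix.vecMulVec (u k) (v l) := by
    have hi : Consistent L Φ (latticeHull L (b i)) :=
      hcons _ (hinf _ fun _ hE => hE.1) (hb.not_latticeHull_le_minus (b.orthonormal.ne_zero i))
    obtain ⟨u, v, huv⟩ := hi.exists_operatorMatrix_eq_vecMulVec hb
    refine ⟨u, v, fun k l hk hl => ?_⟩
    have hkl : M (rankOne (b k) (b l)) = Matrix.single k l 1 := operatorMatrix_rankOne_basis b k l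
    have hmem : rankOne (b k) (b l) ∈ algL L :=
      hb.mem_algL_iff.mpr (hkl ▸ single_mem_supportedMatrices (basisPreorder_trans hk hl) 1)
    rw [← hkl, hφ hmem, huv k l hk hl]
  obtain ⟨P, Q, hPQ⟩ := exists_units_eq_mul_mul_of_rank_eq (fun _ _ _ h => h) hφrank hφlocal
  refine ⟨Units.map M.symm P, Units.map M.symm Q, fun A hA => M.injective ?_⟩
  rw [← hφ hA, hPQ _ (hb.mem_algL_iff.mp hA)]
  simp [M]

end RankPreservingMaps

theorem stmt_16_general {H : Type*} [NormedAddCommGroup H] [InnerProductSpace ℂ H]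
    [FiniteDimensional ℂ H]
    (L : Set (Submodule ℂ H)) (hinf : ∀ S ⊆ L, sInf S ∈ L)
    (hcomm : ∀ E ∈ L, ∀ F ∈ L, Commute (projOf E) (projOf F))
    (Φ : (H →L[ℂ] H) → (H →L[ℂ] H)) (hlin : IsLinearOnAlg L Φ)
    (hrank : RankPreserving L Φ)
    (hcons : ∀ N ∈ L, ¬ N ≤ minus L N → Consistent L Φ N) :
    IsUnit (Φ 1) ∧
    (∀ A ∈ algL L, A * Ring.inverse (Φ 1) ∈ algL L) ∧
    ∃ U : H →L[ℂ] H, IsUnit U ∧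
      (∀ A ∈ algL L, Φ A * Ring.inverse (Φ 1) = U * A * Ring.inverse U) ∧
      (Φ 1 * Ring.inverse (Φ 1) = 1) ∧
      (∀ A ∈ algL L, ∀ B ∈ algL L,
        Φ (A * B) * Ring.inverse (Φ 1)
          = (Φ A * Ring.inverse (Φ 1)) * (Φ B * Ring.inverse (Φ 1))) ∧
      (∀ (c : ℂ), ∀ A ∈ algL L, ∀ B ∈ algL L,
        Φ (c • A + B) * Ring.inverse (Φ 1)
          = c • (Φ A * Ring.inverse (Φ 1)) + Φ B * Ring.inverse (Φ 1)) ∧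
      (∀ A ∈ algL L, ∀ B ∈ algL L,
        Φ A * Ring.inverse (Φ 1) = Φ B * Ring.inverse (Φ 1) → A = B) := by
  obtain ⟨b, hb⟩ := exists_orthonormalBasis_isAdapted hcomm
  obtain ⟨P, Q, hΦ⟩ := exists_units_eq_mul_mul_of_rankPreserving hinf hb hlin hrank hcons
  have one_mem : (1 : H →L[ℂ] H) ∈ algL L := (algSubalgebra L).one_mem
  have hone : Φ 1 = ↑(P * Q) := by rw [hΦ 1 one_mem, mul_one, Units.val_mul]
  have hunit : IsUnit (Φ 1) := hone ▸ (P * Q).isUnit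
  have hconj (A) (hA : A ∈ algL L) :
      Φ A * Ring.inverse (Φ 1) = P * A * Ring.inverse (P : H →L[ℂ] H) := by
    rw [hone, Ring.inverse_unit, Ring.inverse_unit, hΦ A hA, mul_inv_rev, Units.val_mul,
      ← mul_assoc, Units.mul_inv_cancel_right]
  have hinv : Ring.inverse (Φ 1) ∈ algL L :=
    mem_algL_of_mul_eq_one (hlin.maps 1 one_mem) (Ring.inverse_mul_cancel _ hunit)
  refine ⟨hunit, fun A hA => (algSubalgebra L).mul_mem hA hinv, P, P.isUnit, hconj,
    Ring.mul_inverse_cancel _ hunit, fun A hA B hB => ?_, fun c A hA B hB => ?_,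
    fun A hA B hB h => ?_⟩
  · rw [hconj _ ((algSubalgebra L).mul_mem hA hB), hconj A hA, hconj B hB, Ring.inverse_unit]
    simp only [mul_assoc, Units.inv_mul_cancel_left]
  · rw [hlin.map_add _ ((algSubalgebra L).smul_mem hA c) B hB, hlin.map_smul c A hA, add_mul,
      smul_mul_assoc]
  · simpa only [hconj A hA, hconj B hB, Ring.inverse_unit, Units.mul_left_inj,
      Units.mul_right_inj] using h

theorem stmt_16 {H : Type*} [NormedAddCommGroup H] [InnerProductSpace ℂ H]
    [FiniteDimensional ℂ H]
    (L : Set (Submodule ℂ H)) (hL : IsCSL L)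
    (Φ : (H →L[ℂ] H) → (H →L[ℂ] H)) (hlin : IsLinearOnAlg L Φ)
    (hrank : RankPreserving L Φ)
    (hcons : ∀ N ∈ L, N ≠ ⊥ → minus L N ≠ ⊤ → Consistent L Φ N) :
    IsUnit (Φ 1) ∧
    (∀ A ∈ algL L, A * Ring.inverse (Φ 1) ∈ algL L) ∧
    ∃ U : H →L[ℂ] H, IsUnit U ∧
      (∀ A ∈ algL L, Φ A * Ring.inverse (Φ 1) = U * A * Ring.inverse U) ∧
      (Φ 1 * Ring.inverse (Φ 1) = 1) ∧
      (∀ A ∈ algL L, ∀ B ∈ algL L,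
        Φ (A * B) * Ring.inverse (Φ 1)
          = (Φ A * Ring.inverse (Φ 1)) * (Φ B * Ring.inverse (Φ 1))) ∧
      (∀ (c : ℂ), ∀ A ∈ algL L, ∀ B ∈ algL L,
        Φ (c • A + B) * Ring.inverse (Φ 1)
          = c • (Φ A * Ring.inverse (Φ 1)) + Φ B * Ring.inverse (Φ 1)) ∧
      (∀ A ∈ algL L, ∀ B ∈ algL L,
        Φ A * Ring.inverse (Φ 1) = Φ B * Ring.inverse (Φ 1) → A = B) := by
  exact stmt_16_general L hL.sInf_mem hL.commutes Φ hlin hrank fun N hN hle =>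
    hcons N hN (fun h => hle (h ▸ bot_le)) fun h => hle (h ▸ le_top)
end

section
/- Let L be a completely distributive commutative subspace lattice on a complex separable Hilbert space H. Then ⋁{N : N ∈ L, N₋ ≠ H} = H and ⋁{N₋^⊥ : N ∈ L, N ≠ {0}} = H, where joins are closed linear spans. -/
open scoped InnerProductSpace

/-!
In a completely distributive complete lattice write `a₋` for the join of all elements that do not
dominate `a`. Distribute `⨅ a ≰ x, ⨆ b ≱ a, b`: for a choice function `φ`, the element
`s = ⨅ a, φ a` lies below `x`, since otherwise `φ s ≥ s`, against the choice of `φ s`.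
Hence `⨅ a ≰ x, a₋ = x`, and the dual law gives `⨆ {a | x ≰ a₋} = x` in the same way.
The two claims are the cases `x = ⊤` of the second identity and `x = ⊥` of the first, the latter
after taking orthogonal complements.
-/

open Set TopologicalSpace

universe u w

section CompleteLattice

variable {α : Type*}

/-- The element `a₋` of a complete lattice: the join of all elements that do not dominate `a`.
It is the order-theoretic form of `minus`. -/
def sSupNotGE [CompleteLattice α] (a : α) : α :=
  sSup {b | ¬ a ≤ b}

theorem le_sSupNotGE [CompleteLattice α] {a b : α} (h : ¬ a ≤ b) : b ≤ sSupNotGE a :=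
  le_sSup h

theorem sSupNotGE_iInf_le [CompleteLattice α] (x : α) :
    sSupNotGE (⨅ b : {b // ¬ b ≤ x}, (b : α)) ≤ x := by
  refine sSup_le fun b hb => ?_
  by_contra hbx
  exact hb (iInf_le (fun b : {b // ¬ b ≤ x} => (b : α)) ⟨b, hbx⟩)

theorem iInf_choice_le [CompleteLattice α] {x : α} (φ : ∀ a : {a // ¬ a ≤ x}, {b // ¬ a.1 ≤ b}) :
    ⨅ a, (φ a : α) ≤ x := by
  by_contra h
  exact (φ ⟨_, h⟩).2 (iInf_le (fun a => (φ a : α)) ⟨_, h⟩)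

theorem le_iSup_choice [CompleteLattice α] {x : α} (φ : ∀ a : {a // ¬ x ≤ a}, {b // ¬ b ≤ a.1}) :
    x ≤ ⨆ a, (φ a : α) := by
  by_contra h
  exact (φ ⟨_, h⟩).2 (le_iSup (fun a => (φ a : α)) ⟨_, h⟩)

theorem iInf_sSupNotGE_eq [CompletelyDistribLattice α] (x : α) :
    ⨅ a : {a // ¬ a ≤ x}, sSupNotGE (a : α) = x := by
  refine le_antisymm ?_ (le_iInf fun a => le_sSupNotGE a.2)
  calc ⨅ a : {a // ¬ a ≤ x}, sSupNotGE (a : α)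
      = ⨅ a : {a // ¬ a ≤ x}, ⨆ b : {b // ¬ a.1 ≤ b}, (b : α) :=
        iInf_congr fun _ => sSup_eq_iSup' _
    _ = ⨆ φ : ∀ a : {a // ¬ a ≤ x}, {b // ¬ a.1 ≤ b}, ⨅ a, (φ a : α) := iInf_iSup_eq
    _ ≤ x := iSup_le iInf_choice_le

theorem sSup_not_le_sSupNotGE_eq [CompletelyDistribLattice α] (x : α) :
    sSup {a | ¬ x ≤ sSupNotGE a} = x := by
  refine le_antisymm (sSup_le fun a ha => of_not_not (mt le_sSupNotGE ha)) ?_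
  calc x ≤ ⨅ φ : ∀ a : {a // ¬ x ≤ a}, {b // ¬ b ≤ a.1}, ⨆ a, (φ a : α) :=
        le_iInf le_iSup_choice
    _ = ⨆ a : {a // ¬ x ≤ a}, ⨅ b : {b // ¬ b ≤ a.1}, (b : α) := iSup_iInf_eq.symm
    _ ≤ sSup {a | ¬ x ≤ sSupNotGE a} :=
        iSup_le fun a => le_sSup fun h => a.2 (h.trans (sSupNotGE_iInf_le a.1))

-- A family enters the law only through the set of its sets of values, which is small with `α`.
theorem completelyDistribLattice_minimalAxioms_of_small {α : Type u} [CompleteLattice α]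
    [Small.{w} α]
    (h : ∀ (ι : Type w) (κ : ι → Type w) (f : ∀ i, κ i → α),
      ⨅ i, ⨆ j, f i j = ⨆ φ : ∀ i, κ i, ⨅ i, f i (φ i)) :
    CompletelyDistribLattice.MinimalAxioms α where
  iInf_iSup_eq {ι κ} f := by
    refine le_antisymm ?_ le_iInf_iSup
    let values : ι → Set α := fun i => range (f i)
    let e := equivShrink.{w} (range values)
    let val (s : Shrink.{w} (range values)) (v : Shrink.{w} (e.symm s).1) : α :=
      ((equivShrink _).symm v).1
    calc ⨅ i, ⨆ j, f i j
        ≤ ⨅ s, ⨆ v, val s v := le_iInf fun s => by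
          obtain ⟨i, hi⟩ := (e.symm s).2
          refine iInf_le_of_le i (iSup_le fun j => ?_)
          have hj : f i j ∈ (e.symm s).1 := hi ▸ mem_range_self j
          refine le_iSup_of_le (equivShrink _ ⟨f i j, hj⟩) ?_
          simp only [val, Equiv.symm_apply_apply, le_refl]
      _ = ⨆ ψ : ∀ s, Shrink.{w} (e.symm s).1, ⨅ s, val s (ψ s) := h _ _ val
      _ ≤ ⨆ φ : ∀ i, κ i, ⨅ i, f i (φ i) := iSup_le fun ψ => by
          let s (i : ι) := e ⟨values i, mem_range_self i⟩
          have hvalues (i : ι) : val (s i) (ψ (s i)) ∈ values i := by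
            have hs : (e.symm (s i)).1 = values i := by simp only [s, Equiv.symm_apply_apply]
            exact hs ▸ ((equivShrink _).symm (ψ (s i))).2
          choose φ hφ using hvalues
          exact le_iSup_of_le φ (le_iInf fun i => iInf_le_of_le (s i) (hφ i).ge)

end CompleteLattice

theorem small_of_separableSpace (X : Type*) [TopologicalSpace X] [T2Space X] [FrechetUrysohnSpace X]
    [SeparableSpace X] : Small.{0} X := by
  obtain ⟨s, hs, hdense⟩ := exists_countable_dense X
  have : Countable s := hs.to_subtype
  have hlim (x : X) : ∃ u : ℕ → s, Filter.Tendsto (fun n => (u n : X)) Filter.atTop (nhds x) := by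
    obtain ⟨u, hus, hu⟩ := mem_closure_iff_seq_limit.1 (hdense x)
    exact ⟨fun n => ⟨u n, hus n⟩, hu⟩
  choose u hu using hlim
  refine small_of_injective (f := u) fun x y hxy => ?_
  exact tendsto_nhds_unique (hu x) (hxy ▸ hu y)

theorem small_submodule (R M : Type*) [Semiring R] [AddCommMonoid M] [Module R M] [Small.{w} M] :
    Small.{w} (Submodule R M) :=
  small_of_injective (SetLike.coe_injective (A := Submodule R M))

section Hilbert

variable {H : Type*} [NormedAddCommGroup H] [InnerProductSpace ℂ H]

theorem le_closedJoin {S : Set (Submodule ℂ H)} {E : Submodule ℂ H} (hE : E ∈ S) :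
    E ≤ closedJoin S :=
  (le_sSup hE).trans (Submodule.le_topologicalClosure _)

theorem closedJoin_le {S : Set (Submodule ℂ H)} {F : Submodule ℂ H} (hF : IsClosed (F : Set H))
    (h : ∀ E ∈ S, E ≤ F) : closedJoin S ≤ F :=
  Submodule.topologicalClosure_minimal _ (sSup_le h) hF

theorem closedJoin_orthogonal_image [CompleteSpace H] {S : Set (Submodule ℂ H)}
    (hS : ∀ E ∈ S, IsClosed (E : Set H)) :
    closedJoin ((fun E => Eᗮ) '' S) = (sInf S)ᗮ := by
  have hS' : ∀ E ∈ S, Eᗮᗮ = E := fun E hE => by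
    rw [Submodule.orthogonal_orthogonal_eq_closure, (hS E hE).submodule_topologicalClosure_eq]
  rw [closedJoin, ← Submodule.orthogonal_orthogonal_eq_closure, ← Submodule.sInf_orthogonal,
    iInf_image, sInf_eq_iInf]
  exact congrArg _ (biInf_congr hS')

namespace IsSubspaceLattice

variable {L : Set (Submodule ℂ H)} (hL : IsSubspaceLattice L)

include hL

/-- The complete lattice structure on a subspace lattice, ordered by inclusion. -/
abbrev completeLattice : CompleteLattice L :=
  letI : InfSet L := ⟨fun S => ⟨sInf ((↑) '' S), hL.sInf_mem _ (Subtype.coe_image_subset L S)⟩⟩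
  { completeLatticeOfInf L fun _ =>
      ⟨fun _ hE => sInf_le (α := Submodule ℂ H) (mem_image_of_mem _ hE),
        fun _ hF => le_sInf (α := Submodule ℂ H) (forall_mem_image.2 fun _ hE => hF hE)⟩ with
    sSup := fun S => ⟨closedJoin ((↑) '' S), hL.join_mem _ (Subtype.coe_image_subset L S)⟩
    isLUB_sSup := fun _ => ⟨fun _ hE => le_closedJoin (mem_image_of_mem _ hE),
      fun F hF => closedJoin_le (hL.isClosed F F.2) (forall_mem_image.2 fun _ hE => hF hE)⟩
    top := ⟨⊤, hL.top_mem⟩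
    le_top := fun _ => le_top (α := Submodule ℂ H)
    bot := ⟨⊥, hL.bot_mem⟩
    bot_le := fun _ => bot_le (α := Submodule ℂ H) }

theorem coe_sSup (S : Set L) :
    letI := hL.completeLattice
    ((sSup S : L) : Submodule ℂ H) = closedJoin ((↑) '' S) :=
  rfl

theorem coe_iSup {ι : Sort*} (E : ι → L) :
    letI := hL.completeLattice
    ((⨆ i, E i : L) : Submodule ℂ H) = closedJoin (range fun i => (E i : Submodule ℂ H)) :=
  (congrArg closedJoin (range_comp Subtype.val E)).symm

theorem coe_iInf {ι : Sort*} (E : ι → L) :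
    letI := hL.completeLattice
    ((⨅ i, E i : L) : Submodule ℂ H) = ⨅ i, (E i : Submodule ℂ H) :=
  (congrArg sInf (range_comp Subtype.val E)).symm

theorem coe_sSupNotGE (N : L) :
    letI := hL.completeLattice
    ((sSupNotGE N : L) : Submodule ℂ H) = minus L N := by
  refine (hL.coe_sSup _).trans (congrArg closedJoin ?_)
  ext E
  simp [← Subtype.coe_le_coe, and_comm]

/-- A subspace lattice satisfying `IsCompletelyDistributive` as a `CompletelyDistribLattice`.
The latter quantifies over families indexed by types in the lowest universe only; `Small.{0} L`
bridges the gap to families in the universe of `L`. -/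
abbrev completelyDistribLattice [Small.{0} L] (hcd : IsCompletelyDistributive L) :
    CompletelyDistribLattice L :=
  letI := hL.completeLattice
  .ofMinimalAxioms <| completelyDistribLattice_minimalAxioms_of_small fun ι κ E =>
    Subtype.ext <| by
      simpa only [hL.coe_iInf, hL.coe_iSup] using
        (hcd ι κ (fun i j => E i j) fun i j => (E i j).2).1

theorem closedJoin_not_le_minus_eq [Small.{0} L] (hcd : IsCompletelyDistributive L)
    {E : Submodule ℂ H} (hE : E ∈ L) : closedJoin {N | N ∈ L ∧ ¬ E ≤ minus L N} = E := by
  let := hL.completelyDistribLattice hcd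
  calc closedJoin {N | N ∈ L ∧ ¬ E ≤ minus L N}
      = (sSup {N : L | ¬ ⟨E, hE⟩ ≤ sSupNotGE N} : L) := by
        rw [hL.coe_sSup]
        congr 1
        ext N
        simp [← Subtype.coe_le_coe, hL.coe_sSupNotGE, and_comm]
    _ = E := congrArg Subtype.val (sSup_not_le_sSupNotGE_eq (⟨E, hE⟩ : L))

theorem sInf_minus_image_eq [Small.{0} L] (hcd : IsCompletelyDistributive L)
    {E : Submodule ℂ H} (hE : E ∈ L) : sInf (minus L '' {N | N ∈ L ∧ ¬ N ≤ E}) = E := by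
  let := hL.completelyDistribLattice hcd
  calc sInf (minus L '' {N | N ∈ L ∧ ¬ N ≤ E})
      = (⨅ N : {N : L // ¬ N ≤ ⟨E, hE⟩}, sSupNotGE N.1 : L) := by
        rw [hL.coe_iInf]
        simp only [hL.coe_sSupNotGE, sInf_image, iInf_subtype, mem_ofPred_eq, iInf_and,
          ← Subtype.coe_le_coe]
    _ = E := congrArg Subtype.val (iInf_sSupNotGE_eq (⟨E, hE⟩ : L))

theorem closedJoin_orthogonal_minus_eq [CompleteSpace H] [Small.{0} L]
    (hcd : IsCompletelyDistributive L) {E : Submodule ℂ H} (hE : E ∈ L) :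
    closedJoin ((fun N => (minus L N)ᗮ) '' {N | N ∈ L ∧ ¬ N ≤ E}) = Eᗮ := by
  have hclosed : ∀ F ∈ minus L '' {N | N ∈ L ∧ ¬ N ≤ E}, IsClosed (F : Set H) :=
    forall_mem_image.2 fun _ _ => Submodule.isClosed_topologicalClosure _
  calc closedJoin ((fun N => (minus L N)ᗮ) '' {N | N ∈ L ∧ ¬ N ≤ E})
      = (sInf (minus L '' {N | N ∈ L ∧ ¬ N ≤ E}))ᗮ := by
        rw [← closedJoin_orthogonal_image hclosed, image_image]
    _ = Eᗮ := by rw [hL.sInf_minus_image_eq hcd hE]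

end IsSubspaceLattice

end Hilbert

theorem stmt_18_general {H : Type*} [NormedAddCommGroup H] [InnerProductSpace ℂ H]
    [CompleteSpace H] (L : Set (Submodule ℂ H)) [Small.{0} L] (hL : IsSubspaceLattice L)
    (hcd : IsCompletelyDistributive L) :
    closedJoin {N | N ∈ L ∧ minus L N ≠ ⊤} = ⊤ ∧
    closedJoin ((fun N => ((minus L N)ᗮ : Submodule ℂ H)) '' {N | N ∈ L ∧ N ≠ ⊥}) = ⊤ := by
  constructor
  · simpa only [top_le_iff] using hL.closedJoin_not_le_minus_eq hcd hL.top_mem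
  · simpa only [le_bot_iff, Submodule.bot_orthogonal_eq_top] using
      hL.closedJoin_orthogonal_minus_eq hcd hL.bot_mem

theorem stmt_18 {H : Type*} [NormedAddCommGroup H] [InnerProductSpace ℂ H]
    [CompleteSpace H] [TopologicalSpace.SeparableSpace H]
    (L : Set (Submodule ℂ H)) (hL : IsCSL L) (hcd : IsCompletelyDistributive L) :
    closedJoin {N | N ∈ L ∧ minus L N ≠ ⊤} = ⊤ ∧
    closedJoin ((fun N => ((minus L N)ᗮ : Submodule ℂ H)) '' {N | N ∈ L ∧ N ≠ ⊥}) = ⊤ := by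
  have := small_of_separableSpace H
  have := small_submodule ℂ H
  exact stmt_18_general L hL.toIsSubspaceLattice hcd
end
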